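/- arXiv:2409.17921 — 3 statements merged into one kernel-verified Lean document; each statement's English description precedes it below -/
import Mathlib

section
/- Let $n > 2$ be a cubefree natural number and let $E_n$ be the elliptic curve over $\mathbb{Q}$ with Weierstrass equation $y^2 = x^3 - 432 n^2$. Then the torsion subgroup of the Mordell--Weil group $E_n(\mathbb{Q})$ is trivial: every point of $E_n(\mathbb{Q})$ of finite order is the identity (the point at infinity). -/
/-!
The proof is a height argument on the Fermat cubic `u³ + v³ = n`, to which a nonzero point
`(X, Y)` of `E_n` corresponds by `u = (36n + Y) / (6X)`, `v = (36n - Y) / (6X)`.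

Since `n` is cubefree, one can write `u = x / z`, `v = y / z` with `x, y, z` pairwise coprime
integers, `z > 0`.  The tangent construction gives
`u(2P) = -y (2x³ + y³) / (z (x³ - y³))` (`uCoord_double`), and the numerator and the denominator
of this fraction have greatest common divisor dividing `3`.  As `n > 2`, the pair `(x, y)` is none
of `±(1, 1)`, `±(1, -1)`, `±(1, 0)`, `±(0, 1)`, whence `|x³ - y³| > 3`.  So the denominator of
`u(2P)` is strictly larger than `z` (`den_lt_den`).

Hence doubling strictly increases the denominator of `u` on nonzero points; the points `2ᵏ P` are
pairwise distinct for `P ≠ 0`, and `P` has infinite order.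
-/

/-- The elliptic curve `E_n : y² = x³ - 432n²` over `ℚ`, a Weierstrass model of the
Fermat cubic `x³ + y³ = n z³`. -/
def En (n : ℤ) : WeierstrassCurve ℚ :=
  { a₁ := 0, a₂ := 0, a₃ := 0, a₄ := 0, a₆ := -432 * (n : ℚ) ^ 2 }

lemma three_lt_abs_cube_sub_cube {x y : ℤ} (hx : x ≠ 0) (hy : y ≠ 0) (hne : x ≠ y)
    (hne' : x + y ≠ 0) : 3 < |x ^ 3 - y ^ 3| := by
  have hfac : x ^ 3 - y ^ 3 = (x - y) * (x ^ 2 + x * y + y ^ 2) := by ring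
  have h1 : 1 ≤ |x - y| := Int.one_le_abs (sub_ne_zero.mpr hne)
  have h2 : 1 ≤ (x + y) ^ 2 := by
    have := sq_pos_of_ne_zero hne'; omega
  have h3 : 1 ≤ (x - y) ^ 2 := by
    have := sq_pos_of_ne_zero (sub_ne_zero.mpr hne); omega
  have hx2 : 1 ≤ x ^ 2 := by have := sq_pos_of_ne_zero hx; omega
  have hy2 : 1 ≤ y ^ 2 := by have := sq_pos_of_ne_zero hy; omega
  have h4 : 3 ≤ x ^ 2 + x * y + y ^ 2 := by
    rcases lt_or_gt_of_ne (mul_ne_zero hx hy) with h | h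
    · -- here `x² + xy + y² = (x + y)² - xy` with `xy ≤ -2`
      have : x * y ≠ -1 := by
        intro h'
        rcases Int.eq_one_or_neg_one_of_mul_eq_neg_one h' with rfl | rfl <;> omega
      nlinarith
    · nlinarith
  have h5 : x ^ 2 + x * y + y ^ 2 ≠ 3 ∨ 2 ≤ |x - y| := by
    by_contra! hcon
    obtain ⟨ha, hb⟩ := hcon
    have hd : |x - y| = 1 := by omega
    have hd2 : (x - y) ^ 2 = 1 := by rw [← sq_abs, hd]; norm_num
    -- `3 = (x - y)² + 3xy` would give `3xy = 2`
    have : 3 * (x * y) = 2 := by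
      linarith [show (x - y) ^ 2 + 3 * (x * y) = x ^ 2 + x * y + y ^ 2 by ring]
    omega
  rw [hfac, abs_mul, abs_of_pos (by omega : 0 < x ^ 2 + x * y + y ^ 2)]
  rcases h5 with h | h
  · have : 4 ≤ x ^ 2 + x * y + y ^ 2 := by omega
    nlinarith
  · nlinarith

/-- A rational point of `u³ + v³ = n`, with `n` cubefree, comes from a primitive integral point of
`x³ + y³ = n z³`. -/
lemma exists_primitive {n : ℕ} (hcf : ∀ p : ℕ, p.Prime → ¬ (p ^ 3 ∣ n)) {u v : ℚ}
    (h : u ^ 3 + v ^ 3 = n) :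
    ∃ x y : ℤ, u = x / u.den ∧ v = y / u.den ∧ x ^ 3 + y ^ 3 = n * (u.den : ℤ) ^ 3 ∧
      IsCoprime x y ∧ IsCoprime y (u.den : ℤ) := by
  have hden : v.den = u.den := by
    have h1 : v ^ 3 = (n : ℤ) - u ^ 3 := by push_cast; linarith
    have h2 : (v ^ 3).den = (u ^ 3).den := by rw [h1, Rat.intCast_sub_den]
    rw [Rat.den_pow, Rat.den_pow] at h2
    exact Nat.pow_left_injective (n := 3) (by norm_num) h2
  have hu : u = u.num / u.den := (Rat.num_div_den u).symm
  have hv : v = v.num / u.den := by rw [← hden]; exact (Rat.num_div_den v).symm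
  have hz : (u.den : ℚ) ≠ 0 := by exact_mod_cast u.den_nz
  have heq : u.num ^ 3 + v.num ^ 3 = n * (u.den : ℤ) ^ 3 := by
    have : ((u.num : ℚ) / u.den) ^ 3 + ((v.num : ℚ) / u.den) ^ 3 = n := by rw [← hu, ← hv, h]
    field_simp at this
    rw [mul_comm] at this
    exact_mod_cast this
  have hcz : IsCoprime v.num (u.den : ℤ) := by
    rw [← hden]; exact Rat.isCoprime_num_den v
  refine ⟨u.num, v.num, hu, hv, heq, ?_, hcz⟩
  rw [Int.isCoprime_iff_gcd_eq_one]
  by_contra hg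
  obtain ⟨p, hp, hpd⟩ := Nat.exists_prime_and_dvd hg
  have hpx : (p : ℤ) ∣ u.num := (Int.natCast_dvd_natCast.mpr hpd).trans (Int.gcd_dvd_left ..)
  have hpy : (p : ℤ) ∣ v.num := (Int.natCast_dvd_natCast.mpr hpd).trans (Int.gcd_dvd_right ..)
  have h3 : (p : ℤ) ^ 3 ∣ n * (u.den : ℤ) ^ 3 :=
    heq ▸ dvd_add (pow_dvd_pow_of_dvd hpx 3) (pow_dvd_pow_of_dvd hpy 3)
  have hc : IsCoprime ((p : ℤ) ^ 3) ((u.den : ℤ) ^ 3) :=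
    (hcz.of_isCoprime_of_dvd_left hpy).pow
  exact hcf p hp (by exact_mod_cast hc.dvd_of_dvd_mul_right h3)

/-- If `gcd(a, b) ∣ 3`, then `b` divides three times the reduced denominator of `a / b`. -/
lemma dvd_three_mul_den {a b : ℤ} {w : ℚ} (hb : b ≠ 0) (hw : w = a / b)
    (hab : ∃ r s : ℤ, r * a + s * b = 3) : b ∣ 3 * (w.den : ℤ) := by
  obtain ⟨r, s, hrs⟩ := hab
  have hbq : (b : ℚ) ≠ 0 := by exact_mod_cast hb
  have hd : (w.den : ℚ) ≠ 0 := by exact_mod_cast w.den_nz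
  have h1 : w.num * b = a * (w.den : ℤ) := by
    have h2 : (w.num : ℚ) / w.den = a / b := by rw [Rat.num_div_den, hw]
    rw [div_eq_div_iff hd hbq] at h2
    exact_mod_cast h2
  refine ⟨r * w.num + s * w.den, ?_⟩
  linear_combination -(w.den : ℤ) * hrs - r * h1

/-- The fraction produced by the tangent construction is reduced up to a factor `3`. -/
lemma exists_bezout_three {x y z m : ℤ} (h : x ^ 3 + y ^ 3 = m * z ^ 3) (hxy : IsCoprime x y)
    (hyz : IsCoprime y z) :
    ∃ r s : ℤ, r * (-y * (2 * x ^ 3 + y ^ 3)) + s * (z * (x ^ 3 - y ^ 3)) = 3 := by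
  have hxz : IsCoprime x z := by
    -- `-x³ ≡ y³` modulo `z³`, and `y` is prime to `z`
    have h2 : IsCoprime (y ^ 3) (z ^ 3) := hyz.pow
    have h3 : IsCoprime (x ^ 3) (z ^ 3) := by
      obtain ⟨a, b, hab⟩ := h2
      have h4 : IsCoprime (-x ^ 3 + z ^ 3 * m) (z ^ 3) :=
        ⟨a, b, by linear_combination hab - a * h⟩
      have h5 := (IsCoprime.add_mul_left_left_iff).mp h4
      exact (IsCoprime.neg_left_iff _ _).mp h5
    exact (IsCoprime.pow_iff (by norm_num) (by norm_num)).mp h3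
  have hyd : IsCoprime y (x ^ 3 - y ^ 3) := by
    have : IsCoprime y (x ^ 3 + y * (-y ^ 2)) :=
      (IsCoprime.add_mul_left_right_iff).mpr (hxy.symm.pow_right)
    convert this using 1; ring
  have hfz : IsCoprime (2 * x ^ 3 + y ^ 3) z := by
    have : IsCoprime (x ^ 3 + z * (m * z ^ 2)) z :=
      (IsCoprime.add_mul_left_left_iff).mpr hxz.pow_left
    convert this using 1; linear_combination h
  -- `3 = α·3x³ + β·3y³` lies in the ideal `(2x³ + y³, x³ - y³)`
  obtain ⟨α, β, hαβ⟩ : IsCoprime (x ^ 3) (y ^ 3) := hxy.pow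
  obtain ⟨a, b, hab⟩ := hyd.mul_right hyz
  obtain ⟨c, d, hcd⟩ := hfz
  have key : (α + β) * (2 * x ^ 3 + y ^ 3) + (α - 2 * β) * (x ^ 3 - y ^ 3) = 3 := by
    linear_combination 3 * hαβ
  -- with `F = 2x³ + y³`, `D = x³ - y³`: `3 ∈ (F, D)` and `1 ∈ (F, z)` give `3 ∈ (F, zD)`
  obtain ⟨e, f, hef⟩ : ∃ e f : ℤ, e * (2 * x ^ 3 + y ^ 3) + f * (z * (x ^ 3 - y ^ 3)) = 3 := by
    refine ⟨(α + β) + (α - 2 * β) * (x ^ 3 - y ^ 3) * c, (α - 2 * β) * d, ?_⟩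
    linear_combination key + (α - 2 * β) * (x ^ 3 - y ^ 3) * hcd
  refine ⟨-a * e, e * (2 * x ^ 3 + y ^ 3) * b + f, ?_⟩
  linear_combination hef + e * (2 * x ^ 3 + y ^ 3) * hab

/-- On `E_n` this says that there is no rational point of order two. -/
lemma ne_of_cube_add_cube {n : ℕ} (hn : 2 < n) (hcf : ∀ p : ℕ, p.Prime → ¬ (p ^ 3 ∣ n)) {u v : ℚ}
    (h : u ^ 3 + v ^ 3 = n) : u ≠ v := by
  rintro rfl
  obtain ⟨x, y, hx, hy, heq, hxy, hyz⟩ := exists_primitive hcf h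
  have hz : (u.den : ℚ) ≠ 0 := by exact_mod_cast u.den_nz
  have : x = y := by
    have h1 : (x : ℚ) / u.den = y / u.den := by rw [← hx, ← hy]
    rw [div_left_inj' hz] at h1
    exact_mod_cast h1
  subst this
  have hz1 : (1 : ℤ) ≤ (u.den : ℤ) ^ 3 := by
    have : 0 < (u.den : ℤ) ^ 3 := by have := u.den_pos; positivity
    omega
  have hn' : (2 : ℤ) < n := by exact_mod_cast hn
  rcases Int.isUnit_iff.mp (isCoprime_self.mp hxy) with rfl | rfl <;> nlinarith

/-- The tangent construction on `u³ + v³ = n` strictly increases the denominator. -/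
lemma den_lt_den {n : ℕ} (hn : 2 < n) (hcf : ∀ p : ℕ, p.Prime → ¬ (p ^ 3 ∣ n)) {u v w : ℚ}
    (h : u ^ 3 + v ^ 3 = n) (hw : w * (u ^ 3 - v ^ 3) = -v * (2 * u ^ 3 + v ^ 3)) :
    u.den < w.den := by
  have huv := ne_of_cube_add_cube hn hcf h
  obtain ⟨x, y, hx, hy, heq, hxy, hyz⟩ := exists_primitive hcf h
  have hzpos := u.den_pos
  generalize u.den = z at *
  have hz : (z : ℚ) ≠ 0 := by positivity
  have hne : x ≠ y := by
    rintro rfl; exact huv (hx.trans hy.symm)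
  have hz1 : (1 : ℤ) ≤ (z : ℤ) ^ 3 := by
    have : 0 < (z : ℤ) ^ 3 := by positivity
    omega
  have hn' : (2 : ℤ) < n := by exact_mod_cast hn
  have hpos : 2 < x ^ 3 + y ^ 3 := by nlinarith
  have hx0 : x ≠ 0 := by
    rintro rfl
    rcases Int.isUnit_iff.mp (isCoprime_zero_left.mp hxy) with rfl | rfl <;> norm_num at hpos
  have hy0 : y ≠ 0 := by
    rintro rfl
    rcases Int.isUnit_iff.mp (isCoprime_zero_right.mp hxy) with rfl | rfl <;> norm_num at hpos
  have hne' : x + y ≠ 0 := by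
    intro h0
    rw [eq_neg_of_add_eq_zero_left h0] at hpos
    ring_nf at hpos
    omega
  have h3 := three_lt_abs_cube_sub_cube hx0 hy0 hne hne'
  have hD : x ^ 3 - y ^ 3 ≠ 0 := by
    intro h0; rw [h0] at h3; norm_num at h3
  have hDq : (x : ℚ) ^ 3 - (y : ℚ) ^ 3 ≠ 0 := by exact_mod_cast hD
  have hB : (z : ℤ) * (x ^ 3 - y ^ 3) ≠ 0 := mul_ne_zero (by positivity) hD
  have hw' : w = ((-y * (2 * x ^ 3 + y ^ 3) : ℤ) : ℚ) / ((z * (x ^ 3 - y ^ 3) : ℤ) : ℚ) := by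
    push_cast
    rw [eq_div_iff (mul_ne_zero hz hDq)]
    rw [hx, hy] at hw
    field_simp at hw
    linear_combination hw
  have hdvd := dvd_three_mul_den hB hw' (exists_bezout_three heq hxy hyz)
  have hle := Int.le_of_dvd (by have := w.den_pos; positivity) ((abs_dvd _ _).mpr hdvd)
  rw [abs_mul, Nat.abs_cast] at hle
  have hzpos' : (0 : ℤ) < z := by exact_mod_cast hzpos
  have : (z : ℤ) < w.den := by nlinarith
  exact_mod_cast this

/-- The coordinate `u = (36n + Y) / (6X)` on the Fermat cubic `u³ + v³ = n` of the point `(X, Y)`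
of `E_n`. -/
def uCoord (n : ℕ) (X Y : ℚ) : ℚ := (36 * n + Y) / (6 * X)

lemma En_X_ne_zero {n : ℕ} (hn : 2 < n) {X Y : ℚ} (h : Y ^ 2 = X ^ 3 - 432 * n ^ 2) : X ≠ 0 := by
  rintro rfl
  have : (2 : ℚ) < n := by exact_mod_cast hn
  nlinarith [sq_nonneg Y]

/-- The map from `E_n` lands on the Fermat cubic; negation `Y ↦ -Y` exchanges the coordinates. -/
lemma uCoord_cube_add {n : ℕ} (hn : 2 < n) {X Y : ℚ} (h : Y ^ 2 = X ^ 3 - 432 * n ^ 2) :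
    uCoord n X Y ^ 3 + uCoord n X (-Y) ^ 3 = n := by
  have hX := En_X_ne_zero hn h
  unfold uCoord
  field_simp
  linear_combination (216 * n : ℚ) * h

/-- The duplication formula of `E_n` transported to the Fermat cubic. -/
lemma uCoord_double {n : ℕ} (hn : 2 < n) {X Y X' Y' : ℚ} (h : Y ^ 2 = X ^ 3 - 432 * n ^ 2)
    (hY : Y ≠ 0) (hX' : X' = (3 * X ^ 2 / (2 * Y)) ^ 2 - 2 * X)
    (hY' : Y' = -(3 * X ^ 2 / (2 * Y) * (X' - X) + Y)) :
    uCoord n X' Y' * (uCoord n X Y ^ 3 - uCoord n X (-Y) ^ 3) =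
      -uCoord n X (-Y) * (2 * uCoord n X Y ^ 3 + uCoord n X (-Y) ^ 3) := by
  have hX := En_X_ne_zero hn h
  have hnq : (2 : ℚ) < n := by exact_mod_cast hn
  have hT : Y ^ 2 + 3888 * (n : ℚ) ^ 2 ≠ 0 := by positivity
  have hX3 : X ^ 3 = Y ^ 2 + 432 * n ^ 2 := by linear_combination -h
  have e1 : X' = X * (Y ^ 2 + 3888 * n ^ 2) / (4 * Y ^ 2) := by
    rw [hX']; field_simp; linear_combination 36 * hX3
  have e2 : 36 * n + Y' = (Y - 36 * n) *
      (Y ^ 3 + 9 * (36 * n) * Y ^ 2 + 3 * (36 * n) ^ 2 * Y + 3 * (36 * n) ^ 3) / (8 * Y ^ 3) := by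
    have e3 : Y' = -(3 * X ^ 3 * (3888 * n ^ 2 - 3 * Y ^ 2) / (8 * Y ^ 3) + Y) := by
      rw [hY', e1]; field_simp; ring
    rw [e3, hX3]
    field_simp
    ring
  unfold uCoord
  rw [e2, e1]
  field_simp
  ring

open WeierstrassCurve.Affine in
/-- The height of a point of `E_n`: the denominator of its coordinate `u`, and `0` at infinity. -/
def fermatHeight (n : ℕ) : (En n).toAffine.Point → ℕ
  | .zero => 0
  | .some X Y _ => (uCoord n X Y).den

open WeierstrassCurve.Affine in
lemma fermatHeight_lt_double {n : ℕ} (hn : 2 < n) (hcf : ∀ p : ℕ, p.Prime → ¬ (p ^ 3 ∣ n))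
    (P : (En n).toAffine.Point) (hP : P ≠ 0) : fermatHeight n P < fermatHeight n (P + P) := by
  rcases P with _ | ⟨X, Y, hXY⟩
  · exact absurd rfl hP
  have h : Y ^ 2 = X ^ 3 - 432 * n ^ 2 := by
    have := (equation_iff _ _).mp hXY.1
    simp only [En, WeierstrassCurve.toAffine] at this
    push_cast at this
    linear_combination this
  have hX := En_X_ne_zero hn h
  have hcube := uCoord_cube_add hn h
  have hY : Y ≠ 0 := by
    rintro rfl
    exact ne_of_cube_add_cube hn hcf hcube (by rw [neg_zero])
  have hneg : Y ≠ (En n).toAffine.negY X Y := by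
    simp only [negY, En, WeierstrassCurve.toAffine]
    intro h0; apply hY; linarith
  rw [Point.add_self_of_Y_ne hneg]
  simp only [fermatHeight]
  have hslope : (En n).toAffine.slope X X Y Y = 3 * X ^ 2 / (2 * Y) := by
    rw [slope_of_Y_ne rfl hneg]
    simp only [negY, En, WeierstrassCurve.toAffine]
    congr 1 <;> ring
  refine den_lt_den hn hcf hcube (uCoord_double hn h hY ?_ ?_)
  · rw [hslope]; simp only [addX, En, WeierstrassCurve.toAffine]; ring
  · rw [hslope]; simp only [addY, negAddY, negY, addX, En, WeierstrassCurve.toAffine]; ring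

/-- For a cubefree natural number `n > 2`, the torsion subgroup of `E_n(ℚ)` is
trivial: every point of finite order is the identity. -/
theorem En_rat_torsion_trivial (n : ℕ) (hn : 2 < n)
    (hcf : ∀ p : ℕ, p.Prime → ¬ (p ^ 3 ∣ n))
    (P : (En n).toAffine.Point) (hP : IsOfFinAddOrder P) : P = 0 := by
  by_contra hP0
  have hne : ∀ k : ℕ, 2 ^ k • P ≠ 0 := by
    intro k
    induction k with
    | zero => simpa using hP0
    | succ k ih =>
      intro h0
      have hlt := fermatHeight_lt_double hn hcf _ ih
      rw [← two_nsmul, ← mul_nsmul', ← pow_succ', h0] at hlt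
      exact Nat.not_lt_zero _ hlt
  have hmono : StrictMono fun k : ℕ => fermatHeight n (2 ^ k • P) := by
    refine strictMono_nat_of_lt_succ fun k => ?_
    have hlt := fermatHeight_lt_double hn hcf _ (hne k)
    rwa [← two_nsmul, ← mul_nsmul', ← pow_succ'] at hlt
  have hinj : Function.Injective fun k : ℕ => 2 ^ k • P := fun a b hab =>
    hmono.injective (congrArg (fermatHeight n) hab)
  have hfin : (AddSubmonoid.multiples P : Set (En n).toAffine.Point).Finite :=
    finite_multiples.mpr hP
  exact Set.infinite_range_of_injective hinj
    (hfin.subset (Set.range_subset_iff.mpr fun k => ⟨2 ^ k, rfl⟩))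
end

section
/- There are no rational numbers $a, b$ with $b^2 = a^3 - 3888$; that is, the elliptic curve $E_3 : y^2 = x^3 - 3888$ (the Weierstrass model of $x^3 + y^3 = 3z^3$) has trivial Mordell--Weil group over $\mathbb{Q}$, its only rational point being the point at infinity. -/
/-! ### Descent in the Eisenstein integers -/

/-- The properties of a primitive cube root of unity `η` in the ring of Eisenstein integers that
the descent uses; `l = η - 1` is the prime above `3`. The field `unit` is Kummer's lemma. -/
structure EisensteinRoot {R : Type*} [CommRing R] (η : R) : Prop where
  root : η ^ 2 + η + 1 = 0
  prime : Prime (η - 1)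
  not_dvd_two : ¬ η - 1 ∣ 2
  cube : ∀ a : R, ¬ η - 1 ∣ a → (η - 1) ^ 4 ∣ a ^ 3 - 1 ∨ (η - 1) ^ 4 ∣ a ^ 3 + 1
  unit : ∀ u : Rˣ, (∃ n : ℤ, (η - 1) ^ 2 ∣ (u : R) - n) → u = 1 ∨ u = -1

namespace EisensteinRoot

variable {R : Type*} [CommRing R] {η : R}

lemma pow_three (h : EisensteinRoot η) : η ^ 3 = 1 := by
  linear_combination (η - 1) * h.root

/-- `3` is a unit times `l²`. -/
lemma sq_mul (h : EisensteinRoot η) : (η - 1) ^ 2 * (-η ^ 2) = 3 := by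
  linear_combination (-η ^ 2 + 3 * η - 3) * h.root

/-- If `l ∤ a, b` and `l ∣ a³ + b³` then already `l⁴ ∣ a³ + b³`. -/
lemma pow_four_dvd (h : EisensteinRoot η) {a b : R} (ha : ¬ η - 1 ∣ a) (hb : ¬ η - 1 ∣ b)
    (hab : η - 1 ∣ a ^ 3 + b ^ 3) : (η - 1) ^ 4 ∣ a ^ 3 + b ^ 3 := by
  have h14 : η - 1 ∣ (η - 1) ^ 4 := dvd_pow_self _ (by norm_num)
  rcases h.cube a ha with h1 | h1 <;> rcases h.cube b hb with h2 | h2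
  · refine absurd ?_ h.not_dvd_two
    convert! dvd_sub hab (h14.trans (dvd_add h1 h2)) using 1
    ring
  · convert! dvd_add h1 h2 using 1
    ring
  · convert! dvd_add h1 h2 using 1
    ring
  · refine absurd ?_ h.not_dvd_two
    convert! dvd_sub (h14.trans (dvd_add h1 h2)) hab using 1
    ring

/-- A unit `u` with `l² ∣ a³ + u b³` for some `a, b` prime to `l` is congruent to `±1` modulo
`l²`, because cubes prime to `l` are; by Kummer's lemma it equals `±1`. -/
lemma unit_of_dvd (h : EisensteinRoot η) {a b : R} (ha : ¬ η - 1 ∣ a) (hb : ¬ η - 1 ∣ b)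
    {u : Rˣ} (hab : (η - 1) ^ 2 ∣ a ^ 3 + u * b ^ 3) : u = 1 ∨ u = -1 := by
  have h24 : (η - 1) ^ 2 ∣ (η - 1) ^ 4 := pow_dvd_pow _ (by norm_num)
  apply h.unit
  rcases h.cube a ha with h1 | h1 <;> rcases h.cube b hb with h2 | h2 <;>
    replace h1 := h24.trans h1 <;> replace h2 := (h24.trans h2).mul_left (u : R)
  · refine ⟨-1, ?_⟩
    convert! dvd_sub hab (dvd_add h1 h2) using 1
    push_cast; ring
  · refine ⟨1, ?_⟩
    convert! dvd_sub (dvd_add h1 h2) hab using 1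
    push_cast; ring
  · refine ⟨1, ?_⟩
    convert! dvd_sub hab (dvd_add h1 h2) using 1
    push_cast; ring
  · refine ⟨-1, ?_⟩
    convert! dvd_sub (dvd_add h1 h2) hab using 1
    push_cast; ring

lemma add_eq_mul (h : EisensteinRoot η) {a b P : R} (hP : a + b = (η - 1) * P) :
    a ^ 3 + b ^ 3 = (η - 1) ^ 3 * (P * (P + b) * (P + (η + 1) * b)) := by
  obtain rfl : a = (η - 1) * P - b := by linear_combination hP
  linear_combination
    -(((η - 1) * P - b) ^ 2 * b + η * ((η - 1) * P - b) * b ^ 2 + (η - 1) * b ^ 3) * h.root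

variable [IsDomain R] [IsPrincipalIdealRing R]

/-- One step of the descent, for a solution normalized so that `l² ∣ a + b`. -/
lemma descent_step (h : EisensteinRoot η) {n : ℕ} {a b w P : R} {u : Rˣ}
    (hb : ¬ η - 1 ∣ b) (hw : ¬ η - 1 ∣ w) (hab : IsCoprime a b)
    (H : a ^ 3 + b ^ 3 = u * (η - 1) ^ (3 * n + 5) * w ^ 3)
    (hP : a + b = (η - 1) * P) (hlP : η - 1 ∣ P) :
    ∃ (Y Z X : R) (v : Rˣ), ¬ η - 1 ∣ Y ∧ ¬ η - 1 ∣ Z ∧ ¬ η - 1 ∣ X ∧ IsCoprime Y Z ∧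
      Y ^ 3 + Z ^ 3 = v * (η - 1) ^ (3 * n + 2) * X ^ 3 := by
  have hl0 : η - 1 ≠ 0 := h.prime.ne_zero
  have hr := h.root
  -- `Q` and `T` are `(a + η b) / l` and `(a + η² b) / l`.
  obtain ⟨Q, hQ⟩ : ∃ Q, Q = P + b := ⟨_, rfl⟩
  obtain ⟨T, hT⟩ : ∃ T, T = P + (η + 1) * b := ⟨_, rfl⟩
  have hlQ : ¬ η - 1 ∣ Q := by
    rw [hQ]
    exact fun hd => hb ((dvd_add_right hlP).1 hd)
  have hlT : ¬ η - 1 ∣ T := by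
    rw [hT]
    intro hd
    apply hb
    have := ((dvd_add_right hlP).1 hd).mul_left (-η)
    convert! this using 1
    linear_combination b * hr
  have hPQT : P * Q * T = u * (η - 1) ^ (3 * n + 2) * w ^ 3 := by
    apply mul_left_cancel₀ (pow_ne_zero 3 hl0)
    rw [hQ, hT, ← h.add_eq_mul hP, H]
    ring
  obtain ⟨x, hx⟩ : (η - 1) ^ (3 * n + 2) ∣ P := by
    have hd : (η - 1) ^ (3 * n + 2) ∣ T * (Q * P) :=
      ⟨u * w ^ 3, by linear_combination hPQT⟩
    exact h.prime.pow_dvd_of_dvd_mul_left _ hlQ (h.prime.pow_dvd_of_dvd_mul_left _ hlT hd)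
  have hxQT : x * Q * T = u * w ^ 3 := by
    apply mul_left_cancel₀ (pow_ne_zero (3 * n + 2) hl0)
    rw [hx] at hPQT
    linear_combination hPQT
  -- A common divisor of two of `P, Q, T` divides `b`, hence `a`.
  obtain ⟨s, t, hst⟩ := hab
  have cPQ : IsCoprime P Q := ⟨s * (η - 1) + s - t, t - s, by
    linear_combination hst - s * hP + (t - s) * hQ⟩
  have cPT : IsCoprime P T := ⟨s * (η - 1) + (t - s) * η, -(t - s) * η, by
    linear_combination hst - s * hP - (t - s) * η * hT - (t - s) * b * hr⟩
  have cQT : IsCoprime Q T :=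
    ⟨s * (η - 1) - (t - s * η) * η ^ 2, (t - s * η) * η ^ 2, by
    linear_combination hst - s * hP + s * (η - 1) * hQ + (t - s * η) * η ^ 2 * (hT - hQ)
      + (t - s * η) * b * h.pow_three⟩
  rw [hx] at cPQ cPT
  have cxQ : IsCoprime x Q := cPQ.of_mul_left_right
  have cxT : IsCoprime x T := cPT.of_mul_left_right
  have hass : Associated (w ^ 3) (x * Q * T) := ⟨u, by rw [hxQT, mul_comm]⟩
  have cxQT := cxT.mul_left cQT
  obtain ⟨V, hV⟩ := exists_associated_pow_of_associated_pow_mul cxQT hass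
  obtain ⟨X, u₁, hX⟩ := exists_associated_pow_of_associated_pow_mul cxQ hV
  obtain ⟨Y, u₂, hY⟩ :=
    exists_associated_pow_of_associated_pow_mul cxQ.symm (mul_comm x Q ▸ hV)
  obtain ⟨Z, u₃, hZ⟩ :=
    exists_associated_pow_of_associated_pow_mul cxQT.symm (mul_comm (x * Q) T ▸ hass)
  have hlx : ¬ η - 1 ∣ x := by
    intro hd
    have : η - 1 ∣ u * w ^ 3 := hxQT ▸ (hd.mul_right Q).mul_right T
    exact hw (h.prime.dvd_of_dvd_pow (Units.dvd_mul_left.1 this))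
  have aux : ∀ {A B : R} {v : Rˣ}, A ^ 3 * v = B → ¬ η - 1 ∣ B → ¬ η - 1 ∣ A :=
    fun e hB hd => hB (e ▸ (dvd_pow hd (by norm_num)).mul_right _)
  have hlX := aux hX hlx
  have hlY := aux hY hlQ
  have hlZ := aux hZ hlT
  have cYZ : IsCoprime Y Z := by
    rw [← hY, ← hZ] at cQT
    exact (IsCoprime.pow_iff (by norm_num) (by norm_num)).1
      (cQT.of_mul_left_left.of_mul_right_left)
  have hrel : P + η * Q + η ^ 2 * T = 0 := by
    rw [hQ, hT]
    linear_combination (P + η * b) * hr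
  let e : Rˣ := ⟨η, η ^ 2, by linear_combination h.pow_three, by linear_combination h.pow_three⟩
  have hu₂ : (u₂ : R) * (u₂⁻¹ : Rˣ) = 1 := by simp
  have hYZ : Y ^ 3 + (e * u₃ * u₂⁻¹ : Rˣ) * Z ^ 3 =
      (-e ^ 2 * u₁ * u₂⁻¹ : Rˣ) * (η - 1) ^ (3 * n + 2) * X ^ 3 := by
    have he : (e : R) = η := rfl
    rw [hx, ← hX, ← hY, ← hZ] at hrel
    push_cast
    rw [he]
    linear_combination η ^ 2 * (u₂⁻¹ : Rˣ) * hrel - Y ^ 3 * η ^ 3 * hu₂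
      - (Y ^ 3 + η * u₃ * (u₂⁻¹ : Rˣ) * Z ^ 3) * h.pow_three
  have hu₄ : (e * u₃ * u₂⁻¹ : Rˣ) = 1 ∨ (e * u₃ * u₂⁻¹ : Rˣ) = -1 := by
    refine h.unit_of_dvd hlY hlZ ?_
    rw [hYZ]
    exact ((pow_dvd_pow _ (by lia)).mul_left _).mul_right _
  rcases hu₄ with h4 | h4 <;> rw [h4] at hYZ
  · exact ⟨Y, Z, X, _, hlY, hlZ, hlX, cYZ, by rwa [Units.val_one, one_mul] at hYZ⟩
  · refine ⟨Y, -Z, X, -e ^ 2 * u₁ * u₂⁻¹, hlY, by simpa using hlZ, hlX, cYZ.neg_right, ?_⟩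
    rw [← hYZ]
    push_cast
    ring

/-- Multiplying `b` by a power of `η` achieves the normalization required by `descent_step`. -/
lemma exists_smaller (h : EisensteinRoot η) {n : ℕ} {a b w : R} {u : Rˣ}
    (hb : ¬ η - 1 ∣ b) (hw : ¬ η - 1 ∣ w) (hab : IsCoprime a b)
    (H : a ^ 3 + b ^ 3 = u * (η - 1) ^ (3 * n + 5) * w ^ 3) :
    ∃ (Y Z X : R) (v : Rˣ), ¬ η - 1 ∣ Y ∧ ¬ η - 1 ∣ Z ∧ ¬ η - 1 ∣ X ∧ IsCoprime Y Z ∧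
      Y ^ 3 + Z ^ 3 = v * (η - 1) ^ (3 * n + 2) * X ^ 3 := by
  have hr := h.root
  have hη : IsUnit η := IsUnit.of_mul_eq_one (η ^ 2) (by linear_combination h.pow_three)
  obtain ⟨P, hP⟩ : η - 1 ∣ a + b := by
    have hd : η - 1 ∣ (a + b) ^ 3 := by
      have e : (a + b) ^ 3 = (η - 1) * (u * (η - 1) ^ (3 * n + 4) * w ^ 3
          + (η - 1) * (-η ^ 2) * (a * b * (a + b))) := by
        linear_combination H - a * b * (a + b) * h.sq_mul
      exact ⟨_, e⟩
    exact h.prime.dvd_of_dvd_pow hd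
  have hprod : η - 1 ∣ P * (P + b) * (P + (η + 1) * b) := by
    refine ⟨u * (η - 1) ^ (3 * n + 1) * w ^ 3, ?_⟩
    apply mul_left_cancel₀ (pow_ne_zero 3 h.prime.ne_zero)
    rw [← h.add_eq_mul hP, H]
    ring
  have hb' : ∀ i, ¬ η - 1 ∣ η ^ i * b := fun i hd => hb ((hη.pow i).dvd_mul_left.1 hd)
  have hab' : ∀ i, IsCoprime a (η ^ i * b) := fun i =>
    (isCoprime_mul_unit_left_right (hη.pow i) a b).2 hab
  have H' : ∀ i, a ^ 3 + (η ^ i * b) ^ 3 = u * (η - 1) ^ (3 * n + 5) * w ^ 3 := by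
    intro i
    rw [mul_pow, ← pow_mul, mul_comm i 3, pow_mul, h.pow_three, one_pow, one_mul, H]
  rcases h.prime.dvd_or_dvd hprod with hd | hd
  · rcases h.prime.dvd_or_dvd hd with hd | hd
    · exact h.descent_step hb hw hab H hP hd
    · exact h.descent_step (hb' 1) hw (hab' 1) (H' 1) (by linear_combination hP) hd
  · exact h.descent_step (hb' 2) hw (hab' 2) (H' 2) (by linear_combination hP) hd

theorem descent (h : EisensteinRoot η) (n : ℕ) : ∀ (a b w : R) (u : Rˣ), ¬ η - 1 ∣ a →
    ¬ η - 1 ∣ b → ¬ η - 1 ∣ w → IsCoprime a b →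
    a ^ 3 + b ^ 3 ≠ u * (η - 1) ^ (3 * n + 5) * w ^ 3 := by
  induction n with
  | zero =>
    intro a b w u _ hb hw hab H
    obtain ⟨Y, Z, X, v, hY, hZ, hX, -, E⟩ := h.exists_smaller hb hw hab H
    have hd : (η - 1) ^ 4 ∣ Y ^ 3 + Z ^ 3 := by
      refine h.pow_four_dvd hY hZ ?_
      rw [E]
      exact ((dvd_pow_self _ (by lia)).mul_left _).mul_right _
    obtain ⟨k, hk⟩ := hd
    have : η - 1 ∣ v * X ^ 3 := by
      refine ⟨(η - 1) * k, ?_⟩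
      apply mul_left_cancel₀ (pow_ne_zero 2 h.prime.ne_zero)
      linear_combination hk - E
    exact hX (h.prime.dvd_of_dvd_pow (Units.dvd_mul_left.1 this))
  | succ n ih =>
    intro a b w u _ hb hw hab H
    obtain ⟨Y, Z, X, v, hY, hZ, hX, hYZ, E⟩ := h.exists_smaller hb hw hab H
    exact ih Y Z X v hY hZ hX hYZ E

end EisensteinRoot

open NumberField in
lemma IsPrimitiveRoot.eisensteinRoot {K : Type*} [Field K] [NumberField K]
    [IsCyclotomicExtension {3} ℚ K] {ζ : K} (hζ : IsPrimitiveRoot ζ 3) :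
    EisensteinRoot hζ.toInteger where
  root := IsCyclotomicExtension.Rat.Three.eta_sq_add_eta_add_one hζ
  prime := hζ.zeta_sub_one_prime'
  not_dvd_two := by
    replace hζ : IsPrimitiveRoot ζ (3 ^ (0 + 1)) := by simpa using hζ
    have : IsCyclotomicExtension {3 ^ (0 + 1)} ℚ K := by simpa
    exact hζ.toInteger_sub_one_not_dvd_two (by decide)
  cube _ ha :=
    IsCyclotomicExtension.Rat.Three.lambda_pow_four_dvd_cube_sub_one_or_add_one_of_lambda_not_dvd
      hζ ha
  unit _ hu := IsCyclotomicExtension.Rat.Three.eq_one_or_neg_one_of_unit_of_congruent hζ _ hu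

open NumberField in
lemma int_cubes_ne_three_mul_cube_of_three_dvd {p q r : ℤ} (hr : r ≠ 0) (hp : ¬ 3 ∣ p)
    (hq : ¬ 3 ∣ q) (h3 : 3 ∣ r) (hpq : IsCoprime p q) : p ^ 3 + q ^ 3 ≠ 3 * r ^ 3 := by
  intro H
  -- The canonical `ℚ`-algebra structure agrees with that of `CyclotomicField`, but
  -- instance search does not see through this.
  have : IsCyclotomicExtension {3} ℚ (CyclotomicField 3 ℚ) :=
    CyclotomicField.isCyclotomicExtension 3 ℚ
  have hζ := IsCyclotomicExtension.zeta_spec 3 ℚ (CyclotomicField 3 ℚ)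
  have : NumberField (CyclotomicField 3 ℚ) := IsCyclotomicExtension.numberField {3} ℚ _
  have hE := hζ.eisensteinRoot
  have := IsCyclotomicExtension.Rat.three_pid (CyclotomicField 3 ℚ)
  have hdvd : ∀ x : ℤ, hζ.toInteger - 1 ∣ (x : 𝓞 (CyclotomicField 3 ℚ)) → 3 ∣ x := by
    intro x hx
    rwa [← Ideal.norm_dvd_iff (hζ.prime_norm_toInteger_sub_one_of_prime_ne_two' (by decide)),
      hζ.norm_toInteger_sub_one_of_prime_ne_two' (by decide)] at hx
  generalize hζ.toInteger = η at hE hdvd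
  have hr0 : (r : 𝓞 (CyclotomicField 3 ℚ)) ≠ 0 := by exact_mod_cast hr
  obtain ⟨w, hrw, hw⟩ :=
    (FiniteMultiplicity.of_not_isUnit hE.prime.not_isUnit hr0).exists_eq_pow_mul_and_not_dvd
  have hlr : η - 1 ∣ (r : 𝓞 (CyclotomicField 3 ℚ)) := by
    obtain ⟨k, rfl⟩ := h3
    refine ⟨(η - 1) * (-η ^ 2) * k, ?_⟩
    push_cast
    linear_combination -(k : 𝓞 (CyclotomicField 3 ℚ)) * hE.sq_mul
  generalize multiplicity (η - 1) (r : 𝓞 (CyclotomicField 3 ℚ)) = m at hrw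
  obtain _ | n := m
  · rw [pow_zero, one_mul] at hrw
    exact hw (hrw ▸ hlr)
  let e : (𝓞 (CyclotomicField 3 ℚ))ˣ :=
    ⟨-η ^ 2, -η, by linear_combination hE.pow_three, by linear_combination hE.pow_three⟩
  refine hE.descent n p q w e (fun hd => hp (hdvd p hd)) (fun hd => hq (hdvd q hd)) hw
    hpq.intCast ?_
  have HR : (p : 𝓞 (CyclotomicField 3 ℚ)) ^ 3 + q ^ 3 = 3 * r ^ 3 := by exact_mod_cast H
  have he : (e : 𝓞 (CyclotomicField 3 ℚ)) = -η ^ 2 := rfl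
  rw [HR, hrw, he, ← hE.sq_mul]
  ring

/-! ### Integer and rational solutions of `X³ + Y³ = 3` -/

lemma int_cubes_ne_three_mul_cube {p q r : ℤ} (hr : r ≠ 0) (hpq : IsCoprime p q) :
    p ^ 3 + q ^ 3 ≠ 3 * r ^ 3 := by
  intro H
  have h9 : ∀ p q r : ZMod 9, p ^ 3 + q ^ 3 = 3 * r ^ 3 → 3 * r = 0 := by decide
  have h3r : 3 ∣ r := by
    have h := h9 p q r (by exact_mod_cast congrArg (Int.cast : ℤ → ZMod 9) H)
    have h' : ((3 * r : ℤ) : ZMod 9) = 0 := by exact_mod_cast h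
    rw [ZMod.intCast_zmod_eq_zero_iff_dvd] at h'
    lia
  have h3 : (3 : ℤ) ∣ p ^ 3 + q ^ 3 := ⟨_, H⟩
  have hu : ¬ IsUnit (3 : ℤ) := Int.prime_three.not_isUnit
  refine int_cubes_ne_three_mul_cube_of_three_dvd hr (fun hp => ?_) (fun hq => ?_) h3r hpq H
  · have := (dvd_add_right (dvd_pow hp (by norm_num : 3 ≠ 0))).1 h3
    exact hu (hpq.isUnit_of_dvd' hp (Int.prime_three.dvd_of_dvd_pow this))
  · have := (dvd_add_left (dvd_pow hq (by norm_num : 3 ≠ 0))).1 h3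
    exact hu (hpq.isUnit_of_dvd' (Int.prime_three.dvd_of_dvd_pow this) hq)

lemma rat_den_dvd_of_cubes {X Y : ℚ} (H : X ^ 3 + Y ^ 3 = 3) : X.den ∣ Y.den := by
  have hX : (X.den : ℚ) ≠ 0 := by exact_mod_cast X.den_ne_zero
  have hY : (Y.den : ℚ) ≠ 0 := by exact_mod_cast Y.den_ne_zero
  have e : X.num ^ 3 * (Y.den : ℤ) ^ 3 = (X.den : ℤ) ^ 3 * (3 * Y.den ^ 3 - Y.num ^ 3) := by
    rw [← X.num_div_den, ← Y.num_div_den] at H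
    field_simp at H
    have : (X.num : ℚ) ^ 3 * Y.den ^ 3 = X.den ^ 3 * (3 * Y.den ^ 3 - Y.num ^ 3) := by
      linear_combination H
    exact_mod_cast this
  have hc : IsCoprime ((X.den : ℤ) ^ 3) (X.num ^ 3) :=
    (Rat.isCoprime_num_den X).symm.pow
  have := hc.dvd_of_dvd_mul_left (Dvd.intro _ e.symm)
  rw [Int.pow_dvd_pow_iff (by norm_num)] at this
  exact_mod_cast this

lemma rat_cubes_ne_three (X Y : ℚ) : X ^ 3 + Y ^ 3 ≠ 3 := by
  intro H
  have hden : X.den = Y.den :=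
    Nat.dvd_antisymm (rat_den_dvd_of_cubes H) (rat_den_dvd_of_cubes (by rw [add_comm, H]))
  have hX : (X.den : ℚ) ≠ 0 := by exact_mod_cast X.den_ne_zero
  have e : X.num ^ 3 + Y.num ^ 3 = 3 * (X.den : ℤ) ^ 3 := by
    rw [← X.num_div_den, ← Y.num_div_den, ← hden] at H
    field_simp at H
    have : (X.num : ℚ) ^ 3 + Y.num ^ 3 = 3 * X.den ^ 3 := by linear_combination H
    exact_mod_cast this
  refine int_cubes_ne_three_mul_cube (by exact_mod_cast X.den_ne_zero) ?_ e
  -- The cube of `gcd (num X) (num Y)` is prime to the denominator, so it divides `3`.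
  rw [Int.isCoprime_iff_gcd_eq_one]
  set g := Int.gcd X.num Y.num with hg
  have hgX : (g : ℤ) ∣ X.num := Int.gcd_dvd_left ..
  have hgY : (g : ℤ) ∣ Y.num := Int.gcd_dvd_right ..
  have hd : (g : ℤ) ^ 3 ∣ 3 * (X.den : ℤ) ^ 3 :=
    e ▸ dvd_add (pow_dvd_pow_of_dvd hgX 3) (pow_dvd_pow_of_dvd hgY 3)
  have hc : IsCoprime ((g : ℤ) ^ 3) ((X.den : ℤ) ^ 3) :=
    ((Rat.isCoprime_num_den X).of_isCoprime_of_dvd_left hgX).pow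
  have hle := Int.le_of_dvd (by norm_num) (hc.dvd_of_dvd_mul_right hd)
  have h3 : g ^ 3 ≤ 3 := by exact_mod_cast hle
  have hlt : g < 2 := by
    by_contra! hge
    have := Nat.pow_le_pow_left hge 3
    lia
  have h0 : g ≠ 0 := by
    intro h0
    rw [h0] at hd
    simp at hd
  lia

/-! ### The Weierstrass model -/

/-- The birational map to the Fermat cubic: `(108 + b)³ + (108 - b)³ = 648 (b² + 3888)`. -/
lemma rat_sq_ne_cube_sub (a b : ℚ) : b ^ 2 ≠ a ^ 3 - 3888 := by
  intro H
  have ha : a ≠ 0 := by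
    rintro rfl
    nlinarith [sq_nonneg b]
  refine rat_cubes_ne_three ((108 + b) / (6 * a)) ((108 - b) / (6 * a)) ?_
  field_simp
  linear_combination 648 * H

/-- There are no rational numbers `a, b` with `b² = a³ - 3888`; that is, the
elliptic curve `E₃ : y² = x³ - 3888` has trivial Mordell–Weil group over `ℚ`, its only
rational point being the point at infinity. -/
theorem E3_rat_points_trivial :
    (¬ ∃ a b : ℚ, b ^ 2 = a ^ 3 - 3888) ∧ ∀ P : (En 3).toAffine.Point, P = 0 := by
  refine ⟨fun ⟨a, b, h⟩ => rat_sq_ne_cube_sub a b h, ?_⟩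
  rintro (_ | ⟨x, y, hxy⟩)
  · rfl
  · have h := (WeierstrassCurve.Affine.equation_iff _ _).1 hxy.1
    simp only [En] at h
    exact absurd (by push_cast at h; linear_combination h) (rat_sq_ne_cube_sub x y)
end

section
/- There are no rational numbers $x, y$ with $x^3 + y^3 = 3$; that is, $3$ is not a sum of two rational cubes. -/
/-!
The proof is a `λ`-adic infinite descent in the Eisenstein integers `ℤ[η]`, `η² + η + 1 = 0`,
with `λ = η - 1`. Since `3 = -η² λ²`, a rational solution yields coprime `a, b`, not divisible by
`λ`, with `a³ + b³ = u λ^(3n+2) c³`, where `u` is a unit and `λ ∤ c`. No such equation exists, by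
induction on `n`.

* For `n = 0` (`IsEisenstein.no_solution_zero`): cubes of elements prime to `λ` are `±1` modulo
  `λ⁴`, so `λ² ∣ a³ + b³` forces `λ⁴ ∣ a³ + b³`, and hence `λ ∣ c`.
* For `n + 1` (`IsEisenstein.descent`): `a³ + b³ = (a + b)(a + η b)(a + η² b)`, and the factors are
  `λ p`, `λ q`, `λ r` with `p, q, r` pairwise coprime and `p + η q + η² r = 0`. After replacing `b`
  by some `η^i b`, the factor `p` carries all of `λ^(3n+2)`. By unique factorization `p = λ^(3n+2) s`
  and `s`, `q`, `r` are units times cubes, so the linear relation reads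
  `Y³ + w Z³ = v λ^(3n+2) X³`. As `w` is congruent to `±1` modulo `λ²`, Kummer's lemma gives
  `w = ±1`, and this is an equation of the same shape with exponent `3n+2`.
-/

/-- The properties of a primitive cube root of unity `η` of the Eisenstein integers that the descent
uses: `η - 1` is prime, cubes of elements prime to it are `±1` modulo `(η - 1)⁴`, and units
congruent to a rational integer modulo `(η - 1)²` are `±1`. -/
structure IsEisenstein {R : Type*} [CommRing R] (η : R) : Prop where
  sq_add : η ^ 2 + η + 1 = 0
  prime : Prime (η - 1)
  cube : ∀ x : R, ¬ (η - 1) ∣ x → (η - 1) ^ 4 ∣ x ^ 3 - 1 ∨ (η - 1) ^ 4 ∣ x ^ 3 + 1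
  unit : ∀ u : Rˣ, (∃ n : ℤ, (η - 1) ^ 2 ∣ (u : R) - n) → u = 1 ∨ u = -1

namespace IsEisenstein

variable {R : Type*} [CommRing R] {η : R}

lemma not_dvd_two (h : IsEisenstein η) : ¬ (η - 1) ∣ 2 := by
  rintro ⟨k, hk⟩
  -- `3 = -η² (η - 1)²`, so a common divisor of `2` and `3` would be a unit.
  refine h.prime.not_dvd_one ⟨-η ^ 2 * (η - 1) - k, ?_⟩
  linear_combination -hk + (η ^ 2 - 3 * η + 3) * h.sq_add

lemma no_solution_zero [IsDomain R] (h : IsEisenstein η) {a b c : R} (u : Rˣ)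
    (ha : ¬ (η - 1) ∣ a) (hb : ¬ (η - 1) ∣ b) (hc : ¬ (η - 1) ∣ c) :
    a ^ 3 + b ^ 3 ≠ u * (η - 1) ^ 2 * c ^ 3 := by
  intro H
  have key : (η - 1) ^ 4 ∣ a ^ 3 + b ^ 3 := by
    rcases h.cube a ha with ⟨x, hx⟩ | ⟨x, hx⟩ <;> rcases h.cube b hb with ⟨y, hy⟩ | ⟨y, hy⟩
    · refine absurd ⟨u * (η - 1) * c ^ 3 - (η - 1) ^ 3 * (x + y), ?_⟩ h.not_dvd_two
      linear_combination H - hx - hy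
    · exact ⟨x + y, by linear_combination hx + hy⟩
    · exact ⟨x + y, by linear_combination hx + hy⟩
    · refine absurd ⟨-(u * (η - 1) * c ^ 3 - (η - 1) ^ 3 * (x + y)), ?_⟩ h.not_dvd_two
      linear_combination hx + hy - H
  obtain ⟨k, hk⟩ := key
  have h2 : (u : R) * c ^ 3 = (η - 1) ^ 2 * k :=
    mul_left_cancel₀ (pow_ne_zero 2 h.prime.ne_zero) (by linear_combination hk - H)
  refine hc (h.prime.dvd_of_dvd_pow (n := 3) ⟨(↑u⁻¹ : R) * (η - 1) * k, ?_⟩)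
  linear_combination (↑u⁻¹ : R) * h2 - c ^ 3 * u.inv_mul

/-- If `Y³ + w Z³` vanishes modulo `λ²`, then so does `w ± 1` for some sign, and Kummer's lemma
applies to the unit `w`. -/
lemma unit_eq (h : IsEisenstein η) {Y Z : R} (w : Rˣ) (hY : ¬ (η - 1) ∣ Y) (hZ : ¬ (η - 1) ∣ Z)
    (H : (η - 1) ^ 2 ∣ Y ^ 3 + w * Z ^ 3) : w = 1 ∨ w = -1 := by
  obtain ⟨k, hk⟩ := H
  apply h.unit
  rcases h.cube Y hY with ⟨x, hx⟩ | ⟨x, hx⟩ <;> rcases h.cube Z hZ with ⟨y, hy⟩ | ⟨y, hy⟩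
  · refine ⟨-1, k - (η - 1) ^ 2 * (x + w * y), ?_⟩
    push_cast
    linear_combination hk - hx - w * hy
  · refine ⟨1, -k + (η - 1) ^ 2 * (x + w * y), ?_⟩
    push_cast
    linear_combination -hk + hx + w * hy
  · refine ⟨1, k - (η - 1) ^ 2 * (x + w * y), ?_⟩
    push_cast
    linear_combination hk - hx - w * hy
  · refine ⟨-1, -k + (η - 1) ^ 2 * (x + w * y), ?_⟩
    push_cast
    linear_combination -hk + hx + w * hy

/-- The descent step in the normalized case: `a + b = λ p`, `a + η b = λ (p + b)` and
`a + η² b = λ (p - η² b)`, with `p` the cofactor divisible by `λ`. -/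
lemma descent_aux [IsDomain R] [IsPrincipalIdealRing R] (h : IsEisenstein η) {n : ℕ}
    {a b c p : R} (u : Rˣ) (hb : ¬ (η - 1) ∣ b) (hc : ¬ (η - 1) ∣ c)
    (hab : IsCoprime a b) (hp : a + b = (η - 1) * p) (hpd : (η - 1) ∣ p)
    (H : p * (p + b) * (p - η ^ 2 * b) = u * (η - 1) ^ (3 * n + 2) * c ^ 3) :
    ∃ (a' b' c' : R) (u' : Rˣ), ¬ (η - 1) ∣ a' ∧ ¬ (η - 1) ∣ b' ∧ ¬ (η - 1) ∣ c' ∧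
      IsCoprime a' b' ∧ a' ^ 3 + b' ^ 3 = u' * (η - 1) ^ (3 * n + 2) * c' ^ 3 := by
  have h1 := h.sq_add
  have h3 : η ^ 3 = 1 := by linear_combination (η - 1) * h1
  obtain ⟨q, hq⟩ : ∃ q, q = p + b := ⟨_, rfl⟩
  obtain ⟨r, hr⟩ : ∃ r, r = p - η ^ 2 * b := ⟨_, rfl⟩
  rw [← hq, ← hr] at H
  have hqd : ¬ (η - 1) ∣ q := fun hd => hb (by
    have := dvd_sub hd hpd
    rwa [hq, add_sub_cancel_left] at this)
  have hrd : ¬ (η - 1) ∣ r := fun hd => hb (by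
    have := (dvd_sub hpd hd).mul_left η
    rwa [show η * (p - r) = b by rw [hr]; linear_combination b * h3] at this)
  obtain ⟨x, y, hxy⟩ := hab
  -- `a` and `b` are linear combinations of any two of `p`, `q`, `r`.
  have hpq : IsCoprime p q :=
    ⟨x * η - y, y - x, by rw [hq]; linear_combination hxy - x * hp⟩
  have hpr : IsCoprime p r :=
    ⟨y * η - x, (x - y) * η, by
      rw [hr]; linear_combination hxy - x * hp + (x - y) * (-b) * h3⟩
  have hqr : IsCoprime q r :=
    ⟨x * (η - 1) + (y - x * η) * (-η ^ 2), (y - x * η) * η ^ 2, by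
      rw [hq, hr]
      linear_combination hxy - x * hp - (y - x * η) * b * (η ^ 2 - η + 1) * h1⟩
  have hs : (η - 1) ^ (3 * n + 2) ∣ p := by
    have hd : (η - 1) ^ (3 * n + 2) ∣ p * (q * r) :=
      ⟨u * c ^ 3, by linear_combination H⟩
    exact h.prime.pow_dvd_of_dvd_mul_right _ (h.prime.not_dvd_mul hqd hrd) hd
  obtain ⟨s, hs⟩ := hs
  have hl : (η - 1) ^ (3 * n + 2) ≠ 0 := pow_ne_zero _ h.prime.ne_zero
  have hsqr : s * (q * r) = c ^ 3 * u :=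
    mul_left_cancel₀ hl (by rw [hs] at H; linear_combination H)
  have hsq : IsCoprime s q := hpq.of_isCoprime_of_dvd_left ⟨_, by rw [hs, mul_comm]⟩
  have hsr : IsCoprime s r := hpr.of_isCoprime_of_dvd_left ⟨_, by rw [hs, mul_comm]⟩
  have assoc1 : Associated (c ^ 3) (s * (q * r)) := ⟨u, hsqr.symm⟩
  obtain ⟨X, u₁, hX⟩ := exists_associated_pow_of_associated_pow_mul (hsq.mul_right hsr) assoc1
  obtain ⟨Y, u₂, hY⟩ := exists_associated_pow_of_associated_pow_mul (hsq.symm.mul_right hqr)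
    (show Associated (c ^ 3) (q * (s * r)) from ⟨u, by linear_combination -hsqr⟩)
  obtain ⟨Z, u₃, hZ⟩ := exists_associated_pow_of_associated_pow_mul (hsr.symm.mul_right hqr.symm)
    (show Associated (c ^ 3) (r * (s * q)) from ⟨u, by linear_combination -hsqr⟩)
  have hXd : ¬ (η - 1) ∣ X := by
    rintro ⟨k, rfl⟩
    refine hc (h.prime.dvd_of_dvd_pow (n := 3)
      ⟨(η - 1) ^ 2 * k ^ 3 * u₁ * (q * r) * (↑u⁻¹ : R), ?_⟩)
    linear_combination -(c ^ 3) * u.mul_inv - (↑u⁻¹ : R) * hsqr - (q * r) * (↑u⁻¹ : R) * hX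
  have hYd : ¬ (η - 1) ∣ Y := fun hd =>
    hqd (hY ▸ (dvd_pow hd three_ne_zero).mul_right _)
  have hZd : ¬ (η - 1) ∣ Z := fun hd =>
    hrd (hZ ▸ (dvd_pow hd three_ne_zero).mul_right _)
  have hYZ : IsCoprime Y Z :=
    (hqr.of_isCoprime_of_dvd_left
      (hY ▸ (dvd_pow_self Y three_ne_zero).mul_right _)).of_isCoprime_of_dvd_right
      (hZ ▸ (dvd_pow_self Z three_ne_zero).mul_right _)
  let e : Rˣ := ⟨η, η ^ 2, by linear_combination h3, by linear_combination h3⟩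
  have hrel : p + η * q + η ^ 2 * r = 0 := by
    rw [hq, hr]; linear_combination p * h1 - η * b * h3
  -- Divide the relation `p + η q + η² r = 0` by the unit `η u₂`.
  have hF : Y ^ 3 + ((e * u₃ * u₂⁻¹ : Rˣ) : R) * Z ^ 3 =
      ((-(e ^ 2 * u₁ * u₂⁻¹) : Rˣ) : R) * (η - 1) ^ (3 * n + 2) * X ^ 3 := by
    have he : (e : R) = η := rfl
    push_cast
    rw [he]
    rw [hs, ← hX, ← hY, ← hZ] at hrel
    linear_combination η ^ 2 * (↑u₂⁻¹ : R) * hrel - Y ^ 3 * u₂.mul_inv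
      - (Y ^ 3 * u₂ * (↑u₂⁻¹ : R) + η * Z ^ 3 * u₃ * (↑u₂⁻¹ : R)) * h3
  have hw := h.unit_eq (e * u₃ * u₂⁻¹) hYd hZd (by
    rw [hF]
    exact ((pow_dvd_pow _ (by lia)).mul_left _).mul_right _)
  rcases hw with hw | hw
  · refine ⟨Y, Z, X, -(e ^ 2 * u₁ * u₂⁻¹), hYd, hZd, hXd, hYZ, ?_⟩
    rw [← hF, hw]
    simp
  · refine ⟨Y, -Z, X, -(e ^ 2 * u₁ * u₂⁻¹), hYd, by rwa [dvd_neg], hXd, hYZ.neg_right, ?_⟩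
    rw [← hF, hw]
    push_cast
    ring

/-- From exponent `3 (n + 1) + 2` to exponent `3 n + 2`. -/
lemma descent [IsDomain R] [IsPrincipalIdealRing R] (h : IsEisenstein η) {n : ℕ}
    {a b c : R} (u : Rˣ) (hb : ¬ (η - 1) ∣ b) (hc : ¬ (η - 1) ∣ c) (hab : IsCoprime a b)
    (H : a ^ 3 + b ^ 3 = u * (η - 1) ^ (3 * (n + 1) + 2) * c ^ 3) :
    ∃ (a' b' c' : R) (u' : Rˣ), ¬ (η - 1) ∣ a' ∧ ¬ (η - 1) ∣ b' ∧ ¬ (η - 1) ∣ c' ∧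
      IsCoprime a' b' ∧ a' ^ 3 + b' ^ 3 = u' * (η - 1) ^ (3 * n + 2) * c' ^ 3 := by
  have h1 := h.sq_add
  have h3 : η ^ 3 = 1 := by linear_combination (η - 1) * h1
  have hη : IsUnit η := IsUnit.of_mul_eq_one (η ^ 2) (by linear_combination h3)
  -- `(a + b)³ ≡ a³ + b³ ≡ 0` modulo `λ`, because `λ ∣ 3`.
  have hd : (η - 1) ∣ a + b := by
    refine h.prime.dvd_of_dvd_pow (n := 3) ⟨u * (η - 1) ^ (3 * n + 4) * c ^ 3
      - η ^ 2 * (η - 1) * (a * b * (a + b)), ?_⟩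
    linear_combination H + (η ^ 2 - 3 * η + 3) * (a * b * (a + b)) * h1
  obtain ⟨p, hp⟩ := hd
  have hprod : p * (p + b) * (p - η ^ 2 * b) = u * (η - 1) ^ (3 * n + 2) * c ^ 3 := by
    refine mul_left_cancel₀ (pow_ne_zero 3 h.prime.ne_zero) ?_
    rw [show (η - 1) ^ 3 * (p * (p + b) * (p - η ^ 2 * b)) = ((η - 1) * p) *
      ((η - 1) * p + (η - 1) * b) * ((η - 1) * p - (η - 1) * η ^ 2 * b) by ring, ← hp]
    linear_combination H + (a + b) * a * b * h1 + (a + b) * b ^ 2 * h3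
      - (a + b) * (a + η * b) * b * h3
  have hdvd : (η - 1) ∣ p * (p + b) * (p - η ^ 2 * b) := by
    rw [hprod]
    exact ((dvd_pow_self _ (by lia)).mul_left _).mul_right _
  have hu : ∀ {x}, IsUnit x → ¬ (η - 1) ∣ x * b := fun hx => by rwa [hx.dvd_mul_left]
  rcases h.prime.dvd_or_dvd hdvd with hdvd | hdvd
  · rcases h.prime.dvd_or_dvd hdvd with hdvd | hdvd
    · exact h.descent_aux u hb hc hab hp hdvd hprod
    · refine h.descent_aux (b := η * b) (p := p + b) u (hu hη) hc
        ((isCoprime_mul_unit_left_right hη a b).2 hab) (by linear_combination hp) hdvd ?_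
      linear_combination hprod + (p + b) * (p + b - η ^ 3 * b) * b * h1
        - (p + b) * (p - η ^ 2 * b) * b * h3
  · refine h.descent_aux (b := η ^ 2 * b) (p := p - η ^ 2 * b) u (hu (hη.pow 2)) hc
      ((isCoprime_mul_unit_left_right (hη.pow 2) a b).2 hab)
      (by linear_combination hp + b * h3) hdvd ?_
    linear_combination hprod - (p - η ^ 2 * b) * p * (η ^ 2 - η + 1) * b * h1

theorem no_solution [IsDomain R] [IsPrincipalIdealRing R] (h : IsEisenstein η) (n : ℕ) :
    ∀ {a b c : R} (u : Rˣ), ¬ (η - 1) ∣ a → ¬ (η - 1) ∣ b → ¬ (η - 1) ∣ c → IsCoprime a b →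
      a ^ 3 + b ^ 3 ≠ u * (η - 1) ^ (3 * n + 2) * c ^ 3 := by
  induction n with
  | zero => exact fun u ha hb hc _ => h.no_solution_zero u ha hb hc
  | succ n ih =>
    intro a b c u _ hb hc hab H
    obtain ⟨a', b', c', u', ha', hb', hc', hab', H'⟩ := h.descent u hb hc hab H
    exact ih u' ha' hb' hc' hab' H'

end IsEisenstein

open NumberField in
lemma isEisenstein_toInteger {K : Type*} [Field K] [NumberField K] [IsCyclotomicExtension {3} ℚ K]
    {ζ : K} (hζ : IsPrimitiveRoot ζ 3) : IsEisenstein hζ.toInteger where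
  sq_add := IsCyclotomicExtension.Rat.Three.eta_sq_add_eta_add_one hζ
  prime := hζ.zeta_sub_one_prime'
  cube _ hx :=
    IsCyclotomicExtension.Rat.Three.lambda_pow_four_dvd_cube_sub_one_or_add_one_of_lambda_not_dvd
      hζ hx
  unit u hu := IsCyclotomicExtension.Rat.Three.eq_one_or_neg_one_of_unit_of_congruent hζ u hu

open NumberField in
theorem int_cube_add_cube_ne (K : Type*) [Field K] [NumberField K]
    [IsCyclotomicExtension {3} ℚ K] {a b c : ℤ} (hc : c ≠ 0) (hab : IsCoprime a b) (ha : ¬ 3 ∣ a)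
    (hb : ¬ 3 ∣ b) : a ^ 3 + b ^ 3 ≠ 3 * c ^ 3 := by
  intro H
  have hζ := IsCyclotomicExtension.zeta_spec 3 ℚ K
  have : IsPrincipalIdealRing (𝓞 K) := IsCyclotomicExtension.Rat.three_pid K
  have h := isEisenstein_toInteger hζ
  have hdvd (x : ℤ) (hx : ¬ 3 ∣ x) : ¬ (hζ.toInteger - 1) ∣ (x : 𝓞 K) := fun hd => hx (by
    rwa [← Ideal.norm_dvd_iff (hζ.prime_norm_toInteger_sub_one_of_prime_ne_two' (by decide)),
      hζ.norm_toInteger_sub_one_of_prime_ne_two' (by decide)] at hd)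
  have hc0 : (c : 𝓞 K) ≠ 0 := by exact_mod_cast hc
  obtain ⟨c₀, hcc, hcd⟩ := (FiniteMultiplicity.of_not_isUnit h.prime.not_isUnit
    hc0).exists_eq_pow_mul_and_not_dvd
  generalize hζ.toInteger = η at *
  have h1 := h.sq_add
  have h3 : η ^ 3 = 1 := by linear_combination (η - 1) * h1
  let e : (𝓞 K)ˣ := ⟨η, η ^ 2, by linear_combination h3, by linear_combination h3⟩
  have H' : (a : 𝓞 K) ^ 3 + (b : 𝓞 K) ^ 3 = 3 * (c : 𝓞 K) ^ 3 := by exact_mod_cast H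
  refine h.no_solution (-e ^ 2) (hdvd a ha) (hdvd b hb) hcd hab.intCast
    (n := multiplicity (η - 1) (c : 𝓞 K)) ?_
  rw [H']
  have he : (e : 𝓞 K) = η := rfl
  push_cast
  rw [he]
  generalize multiplicity (η - 1) (c : 𝓞 K) = m at *
  rw [hcc]
  linear_combination (η ^ 2 - 3 * η + 3) * ((η - 1) ^ (3 * m) * c₀ ^ 3) * h1

/-- There are no rational numbers `x, y` with `x³ + y³ = 3`; that is, `3` is not
a sum of two rational cubes. -/
theorem three_not_sum_of_two_rat_cubes : ¬ ∃ x y : ℚ, x ^ 3 + y ^ 3 = (3 : ℚ) := by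
  rintro ⟨x, y, h⟩
  have hx0 : (x.den : ℚ) ≠ 0 := by exact_mod_cast x.den_nz
  have hy0 : (y.den : ℚ) ≠ 0 := by exact_mod_cast y.den_nz
  have H : x.num ^ 3 * (y.den : ℤ) ^ 3 + y.num ^ 3 * (x.den : ℤ) ^ 3
      = 3 * (x.den : ℤ) ^ 3 * (y.den : ℤ) ^ 3 := by
    rw [← x.num_div_den, ← y.num_div_den] at h
    field_simp at h
    have h' : (x.num : ℚ) ^ 3 * (y.den : ℚ) ^ 3 + (y.num : ℚ) ^ 3 * (x.den : ℚ) ^ 3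
      = 3 * (x.den : ℚ) ^ 3 * (y.den : ℚ) ^ 3 := by linear_combination h
    exact_mod_cast h'
  have cx : IsCoprime x.num (x.den : ℤ) := by
    rw [Int.isCoprime_iff_nat_coprime]; simpa using x.reduced
  have cy : IsCoprime y.num (y.den : ℤ) := by
    rw [Int.isCoprime_iff_nat_coprime]; simpa using y.reduced
  generalize x.num = a at *
  generalize y.num = b at *
  -- In lowest terms the two denominators agree.
  have hden : x.den = y.den := by
    apply Nat.dvd_antisymm
    · have : (x.den : ℤ) ^ 3 ∣ y.den ^ 3 := (cx.symm.pow (m := 3) (n := 3)).dvd_of_dvd_mul_left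
        ⟨3 * (y.den : ℤ) ^ 3 - b ^ 3, by linear_combination H⟩
      exact_mod_cast (Int.pow_dvd_pow_iff three_ne_zero).1 this
    · have : (y.den : ℤ) ^ 3 ∣ x.den ^ 3 := (cy.symm.pow (m := 3) (n := 3)).dvd_of_dvd_mul_left
        ⟨3 * (x.den : ℤ) ^ 3 - a ^ 3, by linear_combination H⟩
      exact_mod_cast (Int.pow_dvd_pow_iff three_ne_zero).1 this
  have hd0 : (y.den : ℤ) ≠ 0 := by exact_mod_cast y.den_nz
  rw [hden] at H cx
  generalize (y.den : ℤ) = d at *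
  replace H : a ^ 3 + b ^ 3 = 3 * d ^ 3 :=
    mul_left_cancel₀ (pow_ne_zero 3 hd0) (by linear_combination H)
  -- A common prime factor of `a` and `b` is prime to `d`, so its cube would divide `3`.
  have key (p : ℤ) (hp : Prime p) (ha : p ∣ a) (hb : p ∣ b) : False := by
    have hpd : IsCoprime p d := cx.of_isCoprime_of_dvd_left ha
    have h3 : p ^ 3 ∣ 3 := (hpd.pow (m := 3) (n := 3)).dvd_of_dvd_mul_right
      (H ▸ dvd_add (pow_dvd_pow_of_dvd ha 3) (pow_dvd_pow_of_dvd hb 3))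
    have h2 := (Int.prime_iff_natAbs_prime.1 hp).two_le
    have h3' : p.natAbs ^ 3 ≤ 3 := Nat.le_of_dvd (by norm_num) (by
      simpa [Int.natAbs_pow] using Int.natAbs_dvd_natAbs.2 h3)
    have := Nat.pow_le_pow_left h2 3
    lia
  have hab : IsCoprime a b := by
    refine isCoprime_of_prime_dvd ?_ fun p hp ha hb => key p hp ha hb
    rintro ⟨rfl, rfl⟩
    simp [hd0] at H
  have h3a : ¬ 3 ∣ a := fun ha => key 3 Int.prime_three ha
    (Int.prime_three.dvd_of_dvd_pow (n := 3) (by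
      rw [show b ^ 3 = 3 * d ^ 3 - a ^ 3 by linear_combination H]
      exact dvd_sub (dvd_mul_right _ _) (dvd_pow ha three_ne_zero)))
  have h3b : ¬ 3 ∣ b := fun hb => key 3 Int.prime_three
    (Int.prime_three.dvd_of_dvd_pow (n := 3) (by
      rw [show a ^ 3 = 3 * d ^ 3 - b ^ 3 by linear_combination H]
      exact dvd_sub (dvd_mul_right _ _) (dvd_pow hb three_ne_zero))) hb
  have : IsCyclotomicExtension {3} ℚ (CyclotomicField 3 ℚ) :=
    CyclotomicField.isCyclotomicExtension 3 ℚ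
  exact int_cube_add_cube_ne (CyclotomicField 3 ℚ) hd0 hab h3a h3b H
end
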